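/- arXiv:2406.09510 — 2 statements merged into one kernel-verified Lean document; each statement's English description precedes it below -/
import Mathlib

section
/- Token-counting rigidity on the triangle: let α, β, γ be independent hidden variables on arbitrary types Λ_α, Λ_β, Λ_γ with distributions μ_α, μ_β, μ_γ, and let p_A(a|β,γ), p_B(b|α,γ), p_C(c|α,β) be response kernels with outputs in {0,1,2} whose modelled distribution equals the single-token TC distribution with parameters (p_α,p_β,p_γ) ∈ (0,1)³. Then there exist functions τ_α : Λ_α → {0,1}, τ_β : Λ_β → {0,1}, τ_γ : Λ_γ → {0,1} such that Pr(τ_ξ = 1) = p_ξ for ξ = α, β, γ, and with probability one the outputs are deterministic and given by a = τ_β(β) + 1 − τ_γ(γ), b = τ_γ(γ) + 1 − τ_α(α), c = τ_α(α) + 1 − τ_β(β) (i.e. almost surely p_A assigns probability 1 to that value of a, and likewise for b and c). -/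
open MeasureTheory

inductive TOut (I : Type) where
  | zero : TOut I
  | one : I → TOut I
  | two : TOut I
  deriving DecidableEq

instance {I : Type} [Fintype I] [DecidableEq I] : Fintype (TOut I) where
  elems := insert TOut.zero (insert TOut.two (Finset.univ.image TOut.one))
  complete := by
    intro x
    cases x <;> simp

/-- Weight of a Bernoulli(`p`) variable. -/
noncomputable def bern (p : ℝ) (t : Bool) : ℝ := if t then p else 1 - p

/-- Number of tokens received by a party: `s` tokens from one source plus `1 - t`
from the other. -/
def tokOut (s t : Bool) : ℕ := (if s then 1 else 0) + (if t then 0 else 1)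

/-- The single-token token-counting distribution on the triangle with parameters
`(pα, pβ, pγ)`: the distribution of `(ã, b̃, c̃)` with `ã = tβ + (1 - tγ)`,
`b̃ = tγ + (1 - tα)`, `c̃ = tα + (1 - tβ)` for independent Bernoulli `tα, tβ, tγ`. -/
noncomputable def tcP (pα pβ pγ : ℝ) (x y z : ℕ) : ℝ :=
  ∑ tα : Bool, ∑ tβ : Bool, ∑ tγ : Bool,
    bern pα tα * bern pβ tβ * bern pγ tγ *
      (if x = tokOut tβ tγ ∧ y = tokOut tγ tα ∧ z = tokOut tα tβ then 1 else 0)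

/-- Coarse graining `0 ↦ 0`, `1_i ↦ 1`, `2 ↦ 2`. -/
def cg {I : Type} : TOut I → ℕ
  | TOut.zero => 0
  | TOut.one _ => 1
  | TOut.two => 2

/-- Coarse-grained version of a triangle distribution. -/
noncomputable def cgP {IA IB IC : Type} [Fintype IA] [DecidableEq IA] [Fintype IB] [DecidableEq IB]
    [Fintype IC] [DecidableEq IC]
    (P : TOut IA → TOut IB → TOut IC → ℝ) (x y z : ℕ) : ℝ :=
  ∑ a, ∑ b, ∑ c, if cg a = x ∧ cg b = y ∧ cg c = z then P a b c else 0

/-- `tokOut` as an element of `Fin 3`. -/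
def tokOutF (s t : Bool) : Fin 3 := ⟨tokOut s t, by cases s <;> cases t <;> decide⟩

/-! A determinism argument comes first: since any two of the token counts determine the third,
independent local outputs can reproduce their correlations only if they are deterministic. The
outputs then satisfy `A(β, γ) + B(α, γ) + C(α, β) = 3`, which forces
`A = 3 + v(β) - w(γ)`, `B = w(γ) - u(α)`, `C = u(α) - v(β)` for some integer functions `u, v, w`.
The range of a difference of independent variables is the sum of their ranges, and all three
differences have range `2`, so `u`, `v`, `w` take two consecutive values each: they are the token
variables up to a shift. Their Bernoulli parameters are read off from the joint law. -/

section Simplex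

variable {ι κ η : Type*} [Fintype ι] [Fintype κ] [Fintype η]

lemma apply_eq_ite_of_apply_eq_one [DecidableEq ι] {p : ι → ℝ} (hp : p ∈ stdSimplex ℝ ι) {a : ι}
    (ha : p a = 1) (b : ι) : p b = if a = b then 1 else 0 := by
  split_ifs with hab
  · rw [← hab, ha]
  · have h := Finset.add_le_sum (fun i _ => hp.1 i) (Finset.mem_univ a) (Finset.mem_univ b) hab
    linarith [hp.1 b, hp.2]

lemma exists_apply_pos_of_mem_stdSimplex {p : ι → ℝ} (hp : p ∈ stdSimplex ℝ ι) : ∃ a, 0 < p a := by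
  by_contra! h
  linarith [hp.2, Finset.sum_nonpos fun i (_ : i ∈ Finset.univ) => h i]

lemma exists_apply_eq_one_of_forall_pos_eq {p : ι → ℝ} (hp : p ∈ stdSimplex ℝ ι)
    (h : ∀ a a', 0 < p a → 0 < p a' → a = a') : ∃ a, p a = 1 := by
  obtain ⟨a, ha⟩ := exists_apply_pos_of_mem_stdSimplex hp
  have hzero : ∀ b, b ≠ a → p b = 0 := fun b hb =>
    ((hp.1 b).eq_or_lt.resolve_right fun hpos => hb (h b a hpos ha)).symm
  refine ⟨a, ?_⟩
  rw [← hp.2, Finset.sum_eq_single a (fun b _ => hzero b) fun h => absurd (Finset.mem_univ a) h]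

lemma exists_apply_eq_one_of_mul_mul_eq_zero {p : ι → ℝ} {q : κ → ℝ} {r : η → ℝ}
    (hp : p ∈ stdSimplex ℝ ι) (hq : q ∈ stdSimplex ℝ κ) (hr : r ∈ stdSimplex ℝ η)
    {R : ι → κ → η → Prop} (hR : ∀ a a' b c, R a b c → R a' b c → a = a')
    (h : ∀ a b c, ¬ R a b c → p a * q b * r c = 0) : ∃ a, p a = 1 := by
  obtain ⟨b, hb⟩ := exists_apply_pos_of_mem_stdSimplex hq
  obtain ⟨c, hc⟩ := exists_apply_pos_of_mem_stdSimplex hr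
  have hR_of_pos : ∀ a, 0 < p a → R a b c := fun a ha =>
    not_imp_comm.1 (h a b c) (by positivity)
  exact exists_apply_eq_one_of_forall_pos_eq hp fun a a' ha ha' =>
    hR a a' b c (hR_of_pos a ha) (hR_of_pos a' ha')

end Simplex

/-- A response kernel with finitely many outputs: a party that observes `ω` outputs `a` with
probability `p a ω`. -/
structure IsResponse {ι Ω : Type*} [Fintype ι] [MeasurableSpace Ω] (p : ι → Ω → ℝ) : Prop where
  measurable : ∀ a, Measurable (p a)
  mem_stdSimplex : ∀ ω, (fun a => p a ω) ∈ stdSimplex ℝ ι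

namespace IsResponse

variable {ι κ η Ω Ω' : Type*} [Fintype ι] [Fintype κ] [Fintype η]
  [MeasurableSpace Ω] [MeasurableSpace Ω'] {p : ι → Ω → ℝ} {q : κ → Ω → ℝ} {r : η → Ω → ℝ}

lemma comp (hp : IsResponse p) {f : Ω' → Ω} (hf : Measurable f) :
    IsResponse fun a ω => p a (f ω) :=
  ⟨fun a => (hp.measurable a).comp hf, fun ω => hp.mem_stdSimplex (f ω)⟩

lemma exists_measurable_eq_of_apply_eq_one [Nonempty ι] [MeasurableSpace ι] (hp : IsResponse p) :
    ∃ A : Ω → ι, Measurable A ∧ ∀ a ω, p a ω = 1 → A ω = a := by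
  classical
  refine exists_measurable_piecewise (fun a => {ω | p a ω = 1})
    (fun a => hp.measurable a (measurableSet_singleton 1)) (fun a _ => a)
    (fun _ => measurable_const) fun a b hab ω ⟨ha, hb⟩ => ?_
  have hb_zero : p b ω = 0 := by
    rw [apply_eq_ite_of_apply_eq_one (hp.mem_stdSimplex ω) ha b, if_neg hab]
  exact absurd (hb_zero.symm.trans hb) zero_ne_one

lemma mul_mul_nonneg (hp : IsResponse p) (hq : IsResponse q) (hr : IsResponse r) (a : ι) (b : κ)
    (c : η) (ω : Ω) : 0 ≤ p a ω * q b ω * r c ω :=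
  mul_nonneg (mul_nonneg ((hp.mem_stdSimplex ω).1 a) ((hq.mem_stdSimplex ω).1 b))
    ((hr.mem_stdSimplex ω).1 c)

lemma mul_mul_le_one (hp : IsResponse p) (hq : IsResponse q) (hr : IsResponse r) (a : ι) (b : κ)
    (c : η) (ω : Ω) : p a ω * q b ω * r c ω ≤ 1 :=
  have hp' := mem_Icc_of_mem_stdSimplex (hp.mem_stdSimplex ω) a
  have hq' := mem_Icc_of_mem_stdSimplex (hq.mem_stdSimplex ω) b
  have hr' := mem_Icc_of_mem_stdSimplex (hr.mem_stdSimplex ω) c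
  mul_le_one₀ (mul_le_one₀ hp'.2 hq'.1 hq'.2) hr'.1 hr'.2

variable {μ : Measure Ω}

lemma integrable_mul_mul [IsFiniteMeasure μ] (hp : IsResponse p) (hq : IsResponse q)
    (hr : IsResponse r) (a : ι) (b : κ) (c : η) :
    Integrable (fun ω => p a ω * q b ω * r c ω) μ :=
  .of_bound (((hp.measurable a).mul (hq.measurable b)).mul (hr.measurable c)).aestronglyMeasurable
    1 <| ae_of_all _ fun ω => by
      rw [Real.norm_of_nonneg (mul_mul_nonneg hp hq hr a b c ω)]
      exact mul_mul_le_one hp hq hr a b c ω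

theorem ae_exists_apply_eq_one [IsFiniteMeasure μ] (hp : IsResponse p) (hq : IsResponse q)
    (hr : IsResponse r) {R : ι → κ → η → Prop} (hR₁ : ∀ a a' b c, R a b c → R a' b c → a = a')
    (hR₂ : ∀ b b' a c, R a b c → R a b' c → b = b') (hR₃ : ∀ c c' a b, R a b c → R a b c' → c = c')
    (hlaw : ∀ a b c, ¬ R a b c → ∫ ω, p a ω * q b ω * r c ω ∂μ = 0) :
    ∀ᵐ ω ∂μ, (∃ a, p a ω = 1) ∧ (∃ b, q b ω = 1) ∧ ∃ c, r c ω = 1 := by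
  have hzero : ∀ᵐ ω ∂μ, ∀ a b c, ¬ R a b c → p a ω * q b ω * r c ω = 0 := by
    simp only [ae_all_iff]
    exact fun a b c habc => (integral_eq_zero_iff_of_nonneg (mul_mul_nonneg hp hq hr a b c)
      (integrable_mul_mul hp hq hr a b c)).1 (hlaw a b c habc)
  filter_upwards [hzero] with ω h
  have hp' := hp.mem_stdSimplex ω
  have hq' := hq.mem_stdSimplex ω
  have hr' := hr.mem_stdSimplex ω
  refine ⟨exists_apply_eq_one_of_mul_mul_eq_zero hp' hq' hr' hR₁ h,
    exists_apply_eq_one_of_mul_mul_eq_zero (R := fun b a c => R a b c) hq' hp' hr' hR₂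
      fun b a c hn => ?_,
    exists_apply_eq_one_of_mul_mul_eq_zero (R := fun c a b => R a b c) hr' hp' hq' hR₃
      fun c a b hn => ?_⟩
  · rw [mul_comm (q b ω), h a b c hn]
  · rw [mul_assoc, mul_comm, h a b c hn]

lemma measureReal_setOf_eq_eq_eq [MeasurableSpace ι] [MeasurableSpace κ] [MeasurableSpace η]
    [MeasurableSingletonClass ι] [MeasurableSingletonClass κ] [MeasurableSingletonClass η]
    (hp : IsResponse p) (hq : IsResponse q) (hr : IsResponse r)
    {A : Ω → ι} {B : Ω → κ} {C : Ω → η} (hA : Measurable A) (hB : Measurable B) (hC : Measurable C)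
    (h : ∀ᵐ ω ∂μ, p (A ω) ω = 1 ∧ q (B ω) ω = 1 ∧ r (C ω) ω = 1) (a : ι) (b : κ) (c : η) :
    μ.real {ω | A ω = a ∧ B ω = b ∧ C ω = c} = ∫ ω, p a ω * q b ω * r c ω ∂μ := by
  classical
  have hmeas : MeasurableSet {ω | A ω = a ∧ B ω = b ∧ C ω = c} :=
    (hA (measurableSet_singleton a)).inter
      ((hB (measurableSet_singleton b)).inter (hC (measurableSet_singleton c)))
  rw [← integral_indicator_one hmeas]
  refine integral_congr_ae ?_
  filter_upwards [h] with ω ⟨ha, hb, hc⟩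
  rw [apply_eq_ite_of_apply_eq_one (hp.mem_stdSimplex ω) ha a,
    apply_eq_ite_of_apply_eq_one (hq.mem_stdSimplex ω) hb b,
    apply_eq_ite_of_apply_eq_one (hr.mem_stdSimplex ω) hc c]
  simp only [Set.indicator_apply, Set.mem_ofPred_eq, Pi.one_apply, mul_ite, mul_one, mul_zero,
    ite_and]
  split_ifs <;> rfl

end IsResponse

section Product

variable {X Y Z : Type*} [MeasurableSpace X] [MeasurableSpace Y] [MeasurableSpace Z]
  {μ : Measure X} {ν : Measure Y} {ρ : Measure Z}

lemma quasiMeasurePreserving_fst_snd_snd [SFinite μ] [SFinite ν] [SFinite ρ] :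
    Measure.QuasiMeasurePreserving (fun t : X × Y × Z => (t.1, t.2.2))
      (μ.prod (ν.prod ρ)) (μ.prod ρ) :=
  QuasiMeasurePreserving.prodMap (.id μ) Measure.quasiMeasurePreserving_snd

lemma ae_snd_fst_ae_of_ae_prod [SFinite μ] [SFinite ν] [SFinite ρ] {P : X × Y × Z → Prop}
    (h : ∀ᵐ t ∂μ.prod (ν.prod ρ), P t) : ∀ᵐ y ∂ν, ∀ᵐ q ∂μ.prod ρ, P (q.1, y, q.2) := by
  have hswap := (measurePreserving_prodAssoc μ ν ρ).comp
    ((Measure.measurePreserving_swap.prod (MeasurePreserving.id ρ)).comp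
      (measurePreserving_prodAssoc ν μ ρ).symm)
  exact Measure.ae_ae_of_ae_prod (hswap.quasiMeasurePreserving.ae h)

lemma ae_snd_snd_ae_of_ae_prod [SFinite μ] [SFinite ν] [SFinite ρ] {P : X × Y × Z → Prop}
    (h : ∀ᵐ t ∂μ.prod (ν.prod ρ), P t) : ∀ᵐ z ∂ρ, ∀ᵐ q ∂μ.prod ν, P (q.1, q.2, z) := by
  have hrotate := (measurePreserving_prodAssoc μ ν ρ).comp
    (Measure.measurePreserving_swap (μ := ρ) (ν := μ.prod ν))
  exact Measure.ae_ae_of_ae_prod (hrotate.quasiMeasurePreserving.ae h)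

lemma integral_integral_integral [SFinite μ] [SFinite ν] [SFinite ρ] {F : X × Y × Z → ℝ}
    (hF : Integrable F (μ.prod (ν.prod ρ))) :
    ∫ x, ∫ y, ∫ z, F (x, y, z) ∂ρ ∂ν ∂μ = ∫ t, F t ∂μ.prod (ν.prod ρ) := by
  rw [integral_prod _ hF]
  refine integral_congr_ae ?_
  filter_upwards [hF.prod_right_ae] with x hx
  exact (integral_prod _ hx).symm

/-- Fixing generic values `x₀` and `y₀` turns the relation into formulas for `u`, `v`, `w`. -/
theorem exists_ae_eq_sub_of_ae_add_add_eq [SFinite μ] [SFinite ν] [SFinite ρ] [NeZero μ] [NeZero ν]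
    {G : Type*} [AddCommGroup G] [MeasurableSpace G] [MeasurableSub G] [MeasurableNeg G]
    {A : Y × Z → G} {B : X × Z → G} {C : X × Y → G} {n : G} (hB : Measurable B) (hC : Measurable C)
    (h : ∀ᵐ t ∂μ.prod (ν.prod ρ), A t.2 + B (t.1, t.2.2) + C (t.1, t.2.1) = n) :
    ∃ (u : X → G) (v : Y → G) (w : Z → G), Measurable u ∧ Measurable v ∧ Measurable w ∧
      ∀ᵐ t ∂μ.prod (ν.prod ρ), A t.2 = n + v t.2.1 - w t.2.2 ∧
        B (t.1, t.2.2) = w t.2.2 - u t.1 ∧ C (t.1, t.2.1) = u t.1 - v t.2.1 := by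
  obtain ⟨x₀, hx₀⟩ := (Measure.ae_ae_of_ae_prod h).exists
  have hx₀' : ∀ᵐ t ∂μ.prod (ν.prod ρ), A t.2 + B (x₀, t.2.2) + C (x₀, t.2.1) = n :=
    Measure.quasiMeasurePreserving_snd.ae hx₀
  obtain ⟨y₀, hy₀⟩ := (ae_snd_fst_ae_of_ae_prod (h.and hx₀')).exists
  refine ⟨fun x => C (x, y₀) - C (x₀, y₀), fun y => - C (x₀, y), fun z => B (x₀, z),
    by fun_prop, by fun_prop, by fun_prop, ?_⟩
  filter_upwards [h, hx₀', quasiMeasurePreserving_fst_snd_snd.ae hy₀] with t ht htx ⟨hty, htxy⟩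
  have hA : A t.2 = n - B (x₀, t.2.2) - C (x₀, t.2.1) := by rw [← htx]; abel
  have hBt : B (t.1, t.2.2) = B (x₀, t.2.2) - (C (t.1, y₀) - C (x₀, y₀)) := by
    have := hty.trans htxy.symm
    grind
  exact ⟨by grind, hBt, by grind⟩

lemma ae_mem_support_map {E : Type*} [TopologicalSpace E] [HereditarilyLindelofSpace E]
    [MeasurableSpace E] {u : X → E} (hu : Measurable u) : ∀ᵐ x ∂μ, u x ∈ (μ.map u).support :=
  ae_of_ae_map hu.aemeasurable Measure.support_mem_ae

section Support

variable {E F G : Type*} [TopologicalSpace E] [DiscreteTopology E] [MeasurableSpace E]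
  [MeasurableSingletonClass E] [TopologicalSpace F] [DiscreteTopology F] [MeasurableSpace F]
  [MeasurableSingletonClass F] [TopologicalSpace G] [DiscreteTopology G] [MeasurableSpace G]
  [MeasurableSingletonClass G] {u : X → E} {v : Y → F} {w : Z → G}

lemma measure_preimage_singleton_ne_zero_of_mem_support (hu : Measurable u) {i : E}
    (hi : i ∈ (μ.map u).support) : μ (u ⁻¹' {i}) ≠ 0 := by
  rw [← Measure.map_apply hu (measurableSet_singleton i)]
  exact ((Measure.mem_support_iff_forall i).1 hi _ ((isOpen_discrete {i}).mem_nhds rfl)).ne'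

lemma of_ae_prod_of_mem_support [SFinite ν] [SFinite ρ] (hu : Measurable u) (hv : Measurable v)
    (hw : Measurable w) {P : E → F → G → Prop}
    (h : ∀ᵐ t ∂μ.prod (ν.prod ρ), P (u t.1) (v t.2.1) (w t.2.2)) {i : E} {j : F} {k : G}
    (hi : i ∈ (μ.map u).support) (hj : j ∈ (ν.map v).support) (hk : k ∈ (ρ.map w).support) :
    P i j k := by
  have hbox : ∃ᵐ t ∂μ.prod (ν.prod ρ), t ∈ (u ⁻¹' {i}) ×ˢ (v ⁻¹' {j}) ×ˢ (w ⁻¹' {k}) := by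
    rw [frequently_ae_mem_iff, Measure.prod_prod, Measure.prod_prod]
    exact mul_ne_zero (measure_preimage_singleton_ne_zero_of_mem_support hu hi)
      (mul_ne_zero (measure_preimage_singleton_ne_zero_of_mem_support hv hj)
        (measure_preimage_singleton_ne_zero_of_mem_support hw hk))
  obtain ⟨_, ⟨rfl, rfl, rfl⟩, ht⟩ := (hbox.and_eventually h).exists
  exact ht

end Support

theorem exists_measurable_ae_apply_eq_one {ι κ η : Type*} [Fintype ι] [Fintype κ] [Fintype η]
    [Nonempty ι] [Nonempty κ] [Nonempty η]
    [MeasurableSpace ι] [MeasurableSpace κ] [MeasurableSpace η]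
    [MeasurableSingletonClass ι] [MeasurableSingletonClass κ] [MeasurableSingletonClass η]
    [IsFiniteMeasure μ] [IsFiniteMeasure ν] [IsFiniteMeasure ρ]
    {p : ι → Y × Z → ℝ} {q : κ → X × Z → ℝ} {r : η → X × Y → ℝ}
    (hp : IsResponse p) (hq : IsResponse q) (hr : IsResponse r) {R : ι → κ → η → Prop}
    (hR₁ : ∀ a a' b c, R a b c → R a' b c → a = a') (hR₂ : ∀ b b' a c, R a b c → R a b' c → b = b')
    (hR₃ : ∀ c c' a b, R a b c → R a b c' → c = c')
    (hlaw : ∀ a b c, ¬ R a b c →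
      ∫ t, p a t.2 * q b (t.1, t.2.2) * r c (t.1, t.2.1) ∂μ.prod (ν.prod ρ) = 0) :
    ∃ (A : Y × Z → ι) (B : X × Z → κ) (C : X × Y → η),
      Measurable A ∧ Measurable B ∧ Measurable C ∧
      (∀ᵐ t ∂μ.prod (ν.prod ρ), p (A t.2) t.2 = 1 ∧ q (B (t.1, t.2.2)) (t.1, t.2.2) = 1 ∧
        r (C (t.1, t.2.1)) (t.1, t.2.1) = 1) ∧
      ∀ a b c, (μ.prod (ν.prod ρ)).real
        {t | A t.2 = a ∧ B (t.1, t.2.2) = b ∧ C (t.1, t.2.1) = c} =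
        ∫ t, p a t.2 * q b (t.1, t.2.2) * r c (t.1, t.2.1) ∂μ.prod (ν.prod ρ) := by
  obtain ⟨A, hA, hpA⟩ := hp.exists_measurable_eq_of_apply_eq_one
  obtain ⟨B, hB, hqB⟩ := hq.exists_measurable_eq_of_apply_eq_one
  obtain ⟨C, hC, hrC⟩ := hr.exists_measurable_eq_of_apply_eq_one
  have hp' := hp.comp (measurable_snd (α := X))
  have hq' := hq.comp (f := fun t : X × Y × Z => (t.1, t.2.2)) (by fun_prop)
  have hr' := hr.comp (f := fun t : X × Y × Z => (t.1, t.2.1)) (by fun_prop)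
  have hdet : ∀ᵐ t ∂μ.prod (ν.prod ρ), p (A t.2) t.2 = 1 ∧
      q (B (t.1, t.2.2)) (t.1, t.2.2) = 1 ∧ r (C (t.1, t.2.1)) (t.1, t.2.1) = 1 := by
    filter_upwards [hp'.ae_exists_apply_eq_one hq' hr' hR₁ hR₂ hR₃ hlaw]
      with t ⟨⟨a, ha⟩, ⟨b, hb⟩, ⟨c, hc⟩⟩
    rw [hpA a _ ha, hqB b _ hb, hrC c _ hc]
    exact ⟨ha, hb, hc⟩
  exact ⟨A, B, C, hA, hB, hC, hdet, hp'.measureReal_setOf_eq_eq_eq hq' hr' (hA.comp measurable_snd)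
    (hB.comp (by fun_prop)) (hC.comp (by fun_prop)) hdet⟩

end Product

lemma exists_isLeast_isGreatest_of_sub_mem_Icc {S U : Set ℤ} {l r : ℤ}
    (h : ∀ i ∈ S, ∀ k ∈ U, i - k ∈ Set.Icc l r) (hl : ∃ i ∈ S, ∃ k ∈ U, i - k = l)
    (hr : ∃ i ∈ S, ∃ k ∈ U, i - k = r) :
    ∃ m M, IsLeast S m ∧ IsGreatest S M ∧ IsLeast U (M - r) ∧ IsGreatest U (m - l) := by
  obtain ⟨m, hm, k, hk, rfl⟩ := hl
  obtain ⟨M, hM, k', hk', rfl⟩ := hr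
  refine ⟨m, M, ⟨hm, fun i hi => ?_⟩, ⟨hM, fun i hi => ?_⟩, ⟨by simpa using hk', fun j hj => ?_⟩,
    ⟨by simpa using hk, fun j hj => ?_⟩⟩
  · linarith [(h i hi k hk).1]
  · linarith [(h i hi k' hk').2]
  · linarith [(h M hM j hj).2]
  · linarith [(h m hm j hj).1]

/-- With `a, b, c` the diameters of the three sets, the hypotheses give `a + b = b + c = a + c = 2`,
hence `a = b = c = 1`. -/
lemma exists_subset_Icc_of_sub_mem_Icc {S T U : Set ℤ}
    (hST : ∀ i ∈ S, ∀ j ∈ T, i - j ∈ Set.Icc 0 2)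
    (hSU : ∀ i ∈ S, ∀ k ∈ U, i - k ∈ Set.Icc (-2) 0)
    (hTU : ∀ j ∈ T, ∀ k ∈ U, j - k ∈ Set.Icc (-3) (-1))
    (hST₀ : ∃ i ∈ S, ∃ j ∈ T, i - j = 0) (hST₁ : ∃ i ∈ S, ∃ j ∈ T, i - j = 2)
    (hSU₀ : ∃ i ∈ S, ∃ k ∈ U, i - k = -2) (hSU₁ : ∃ i ∈ S, ∃ k ∈ U, i - k = 0)
    (hTU₀ : ∃ j ∈ T, ∃ k ∈ U, j - k = -3) (hTU₁ : ∃ j ∈ T, ∃ k ∈ U, j - k = -1) :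
    ∃ m, S ⊆ Set.Icc m (m + 1) ∧ T ⊆ Set.Icc (m - 1) m ∧ U ⊆ Set.Icc (m + 1) (m + 2) := by
  obtain ⟨m, M, hSm, hSM, hTm, hTM⟩ := exists_isLeast_isGreatest_of_sub_mem_Icc hST hST₀ hST₁
  obtain ⟨m', M', hSm', hSM', hUm, hUM⟩ := exists_isLeast_isGreatest_of_sub_mem_Icc hSU hSU₀ hSU₁
  obtain ⟨n, N, hTm', hTM', hUm', -⟩ := exists_isLeast_isGreatest_of_sub_mem_Icc hTU hTU₀ hTU₁
  have := hSm.unique hSm'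
  have := hSM.unique hSM'
  have := hTm.unique hTm'
  have := hTM.unique hTM'
  have := hUm.unique hUm'
  obtain rfl : M = m + 1 := by omega
  refine ⟨m, fun i hi => ⟨hSm.2 hi, hSM.2 hi⟩, fun j hj => ⟨?_, ?_⟩, fun k hk => ⟨?_, ?_⟩⟩
  · linarith [hTm.2 hj]
  · linarith [hTM.2 hj]
  · linarith [hUm.2 hk]
  · linarith [hUM.2 hk]

section TokenCounting

lemma bern_pos {p : ℝ} (hp : p ∈ Set.Ioo (0 : ℝ) 1) (t : Bool) : 0 < bern p t := by
  cases t <;> simp [bern, hp.1, hp.2]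

lemma bern_measureReal {X : Type*} [MeasurableSpace X] (μ : Measure X) [IsProbabilityMeasure μ]
    {τ : X → Bool} (hτ : Measurable τ) (b : Bool) :
    bern (μ.real {x | τ x = true}) b = μ.real {x | τ x = b} := by
  cases b
  · have hcompl : {x | τ x = false} = {x | τ x = true}ᶜ := by
      ext x
      simp
    have htrue : MeasurableSet {x | τ x = true} := hτ (measurableSet_singleton true)
    rw [hcompl, probReal_compl_eq_one_sub htrue, bern, if_neg Bool.false_ne_true]
  · simp [bern]

/-- For instance, `p` is the weight of `true, true, false` divided by that of `·, true, false`. -/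
lemma eq_of_bern_mul_bern_mul_bern_eq {p q r p' q' r' : ℝ} (hp : 0 < p)
    (hq : q ∈ Set.Ioo (0 : ℝ) 1) (hr : r < 1)
    (h : ∀ x y z : Bool, ¬ (x = y ∧ y = z) →
      bern p' x * bern q' y * bern r' z = bern p x * bern q y * bern r z) :
    p' = p ∧ q' = q ∧ r' = r := by
  have hTTF := h true true false (by decide)
  have hFTF := h false true false (by decide)
  have hTFF := h true false false (by decide)
  have hTFT := h true false true (by decide)
  simp only [bern, if_true, Bool.false_eq_true, if_false] at hTTF hFTF hTFF hTFT
  have hqr : q' * (1 - r') = q * (1 - r) := by linear_combination hTTF + hFTF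
  have hpr : p' * (1 - r') = p * (1 - r) := by linear_combination hTTF + hTFF
  have hpq : p' * (1 - q') = p * (1 - q) := by linear_combination hTFF + hTFT
  have hr' : 0 < 1 - r := sub_pos.2 hr
  refine ⟨mul_right_cancel₀ (mul_pos hq.1 hr').ne' ?_, mul_right_cancel₀ (mul_pos hp hr').ne' ?_,
    mul_right_cancel₀ (mul_pos hp (sub_pos.2 hq.2)).ne' ?_⟩
  · linear_combination hTTF - p' * hqr
  · linear_combination hTTF - q' * hpr
  · linear_combination hTFT - r' * hpq

lemma tcP_eq_zero (pα pβ pγ : ℝ) {a b c : ℕ} (h : a + b + c ≠ 3) : tcP pα pβ pγ a b c = 0 := by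
  refine Finset.sum_eq_zero fun x _ => Finset.sum_eq_zero fun y _ =>
    Finset.sum_eq_zero fun z _ => ?_
  rw [if_neg, mul_zero]
  rintro ⟨rfl, rfl, rfl⟩
  revert h
  cases x <;> cases y <;> cases z <;> simp [tokOut]

/-- Constant assignments are excluded because both of them produce the counts `1, 1, 1`. -/
lemma tcP_tokOutF (pα pβ pγ : ℝ) {x y z : Bool} (h : ¬ (x = y ∧ y = z)) :
    tcP pα pβ pγ (tokOutF y z) (tokOutF z x) (tokOutF x y) =
      bern pα x * bern pβ y * bern pγ z := by
  revert h
  cases x <;> cases y <;> cases z <;> simp [tcP, tokOutF, tokOut]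

lemma tokOutF_eq_iff {x y z x' y' z' : Bool} (h : ¬ (x = y ∧ y = z)) :
    (tokOutF y' z' = tokOutF y z ∧ tokOutF z' x' = tokOutF z x ∧ tokOutF x' y' = tokOutF x y) ↔
      x' = x ∧ y' = y ∧ z' = z := by
  revert x y z x' y' z'
  decide

lemma tokOut_decide_eq {i j m n : ℤ} (hi : i ∈ Set.Icc m (m + 1)) (hj : j ∈ Set.Icc n (n + 1)) :
    (tokOut (decide (i = m + 1)) (decide (j = n + 1)) : ℤ) = i - m + (1 - (j - n)) := by
  obtain ⟨hmi, him⟩ := hi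
  obtain ⟨hnj, hjn⟩ := hj
  simp only [tokOut, decide_eq_true_eq]
  split_ifs <;> omega

variable {X Y Z : Type*} [MeasurableSpace X] [MeasurableSpace Y] [MeasurableSpace Z]
  {μ : Measure X} {ν : Measure Y} {ρ : Measure Z}

lemma exists_ae_mem_Icc_of_ae_sub_mem_Icc [SFinite ν] [SFinite ρ] {u : X → ℤ} {v : Y → ℤ}
    {w : Z → ℤ} (hu : Measurable u) (hv : Measurable v) (hw : Measurable w)
    (hrange : ∀ᵐ t ∂μ.prod (ν.prod ρ), 3 + v t.2.1 - w t.2.2 ∈ Set.Icc 0 2 ∧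
      w t.2.2 - u t.1 ∈ Set.Icc 0 2 ∧ u t.1 - v t.2.1 ∈ Set.Icc 0 2)
    (hattained : ∀ x y z : Bool, ¬ (x = y ∧ y = z) → ∃ᵐ t ∂μ.prod (ν.prod ρ),
      3 + v t.2.1 - w t.2.2 = tokOut y z ∧ w t.2.2 - u t.1 = tokOut z x ∧
        u t.1 - v t.2.1 = tokOut x y) :
    ∃ m, ∀ᵐ t ∂μ.prod (ν.prod ρ), u t.1 ∈ Set.Icc m (m + 1) ∧
      v t.2.1 ∈ Set.Icc (m - 1) m ∧ w t.2.2 ∈ Set.Icc (m + 1) (m + 2) := by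
  have hsupp : ∀ᵐ t ∂μ.prod (ν.prod ρ), u t.1 ∈ (μ.map u).support ∧
      v t.2.1 ∈ (ν.map v).support ∧ w t.2.2 ∈ (ρ.map w).support :=
    (Measure.quasiMeasurePreserving_fst.ae (ae_mem_support_map hu)).and <|
      Measure.quasiMeasurePreserving_snd.ae <|
        (Measure.quasiMeasurePreserving_fst.ae (ae_mem_support_map hv)).and
          (Measure.quasiMeasurePreserving_snd.ae (ae_mem_support_map hw))
  have hmem := fun i hi j hj k hk => of_ae_prod_of_mem_support hu hv hw
    (P := fun i j k => 3 + j - k ∈ Set.Icc 0 2 ∧ k - i ∈ Set.Icc 0 2 ∧ i - j ∈ Set.Icc 0 2)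
    (i := i) (j := j) (k := k) hrange hi hj hk
  have hex := fun x y z h => ((hattained x y z h).and_eventually hsupp).exists
  obtain ⟨t₁, ⟨ha₁, hb₁, hc₁⟩, hi₁, hj₁, hk₁⟩ := hex false true true (by decide)
  obtain ⟨t₂, ⟨ha₂, hb₂, hc₂⟩, hi₂, hj₂, hk₂⟩ := hex true false false (by decide)
  obtain ⟨t₃, ⟨ha₃, hb₃, hc₃⟩, -, hj₃, hk₃⟩ := hex false false true (by decide)
  obtain ⟨t₄, ⟨ha₄, hb₄, hc₄⟩, -, hj₄, hk₄⟩ := hex false true false (by decide)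
  simp only [tokOut, if_true, Bool.false_eq_true, if_false] at *
  obtain ⟨m, hS, hT, hU⟩ := exists_subset_Icc_of_sub_mem_Icc
    (fun i hi j hj => (hmem i hi j hj _ hk₁).2.2)
    (fun i hi k hk => by have := (hmem i hi _ hj₁ k hk).2.1; grind)
    (fun j hj k hk => by have := (hmem _ hi₁ j hj k hk).1; grind)
    ⟨_, hi₁, _, hj₁, by omega⟩ ⟨_, hi₂, _, hj₂, by omega⟩
    ⟨_, hi₁, _, hk₁, by omega⟩ ⟨_, hi₂, _, hk₂, by omega⟩
    ⟨_, hj₃, _, hk₃, by omega⟩ ⟨_, hj₄, _, hk₄, by omega⟩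
  exact ⟨m, hsupp.mono fun t ⟨hi, hj, hk⟩ => ⟨hS hi, hT hj, hU hk⟩⟩

theorem exists_ae_eq_tokOutF [SFinite μ] [SFinite ν] [SFinite ρ] [NeZero μ] [NeZero ν]
    {A : Y × Z → Fin 3} {B : X × Z → Fin 3} {C : X × Y → Fin 3}
    (hB : Measurable B) (hC : Measurable C)
    (hsum : ∀ᵐ t ∂μ.prod (ν.prod ρ),
      (A t.2 : ℕ) + (B (t.1, t.2.2) : ℕ) + (C (t.1, t.2.1) : ℕ) = 3)
    (hattained : ∀ x y z : Bool, ¬ (x = y ∧ y = z) → ∃ᵐ t ∂μ.prod (ν.prod ρ),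
      A t.2 = tokOutF y z ∧ B (t.1, t.2.2) = tokOutF z x ∧ C (t.1, t.2.1) = tokOutF x y) :
    ∃ (τα : X → Bool) (τβ : Y → Bool) (τγ : Z → Bool),
      Measurable τα ∧ Measurable τβ ∧ Measurable τγ ∧
      ∀ᵐ t ∂μ.prod (ν.prod ρ), A t.2 = tokOutF (τβ t.2.1) (τγ t.2.2) ∧
        B (t.1, t.2.2) = tokOutF (τγ t.2.2) (τα t.1) ∧
        C (t.1, t.2.1) = tokOutF (τα t.1) (τβ t.2.1) := by
  have hcast : Measurable fun a : Fin 3 => ((a : ℕ) : ℤ) := measurable_of_countable _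
  obtain ⟨u, v, w, hu, hv, hw, hsplit⟩ := exists_ae_eq_sub_of_ae_add_add_eq (n := (3 : ℤ))
    (A := fun q => ((A q : ℕ) : ℤ)) (B := fun q => ((B q : ℕ) : ℤ)) (C := fun q => ((C q : ℕ) : ℤ))
    (hcast.comp hB) (hcast.comp hC)
    (hsum.mono fun t ht => mod_cast ht)
  obtain ⟨m, hm⟩ := exists_ae_mem_Icc_of_ae_sub_mem_Icc hu hv hw
    (hsplit.mono fun t ⟨ha, hb, hc⟩ => by
      rw [← ha, ← hb, ← hc]
      exact ⟨⟨by omega, by omega⟩, ⟨by omega, by omega⟩, ⟨by omega, by omega⟩⟩)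
    fun x y z h => ((hattained x y z h).and_eventually hsplit).mono
      fun t ⟨⟨ha, hb, hc⟩, ha', hb', hc'⟩ => by
        rw [← ha', ← hb', ← hc', ha, hb, hc]
        exact ⟨rfl, rfl, rfl⟩
  refine ⟨fun x => decide (u x = m + 1), fun y => decide (v y = m - 1 + 1),
    fun z => decide (w z = m + 1 + 1),
    (measurable_of_countable fun i : ℤ => decide (i = m + 1)).comp hu,
    (measurable_of_countable fun i : ℤ => decide (i = m - 1 + 1)).comp hv,
    (measurable_of_countable fun i : ℤ => decide (i = m + 1 + 1)).comp hw, ?_⟩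
  filter_upwards [hsplit, hm] with t ⟨ha, hb, hc⟩ ⟨hu_mem, hv_mem, hw_mem⟩
  have hv_mem' : v t.2.1 ∈ Set.Icc (m - 1) (m - 1 + 1) := by rwa [sub_add_cancel]
  have hw_mem' : w t.2.2 ∈ Set.Icc (m + 1) (m + 1 + 1) := by rwa [add_assoc]
  have haτ := tokOut_decide_eq hv_mem' hw_mem'
  have hbτ := tokOut_decide_eq hw_mem' hu_mem
  have hcτ := tokOut_decide_eq hu_mem hv_mem'
  refine ⟨Fin.ext ?_, Fin.ext ?_, Fin.ext ?_⟩ <;> simp only [tokOutF] <;> omega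

variable [IsProbabilityMeasure μ] [IsProbabilityMeasure ν] [IsProbabilityMeasure ρ]

theorem measureReal_eq_of_ae_eq_tokOutF {A : Y × Z → Fin 3} {B : X × Z → Fin 3} {C : X × Y → Fin 3}
    {τα : X → Bool} {τβ : Y → Bool} {τγ : Z → Bool}
    (hτα : Measurable τα) (hτβ : Measurable τβ) (hτγ : Measurable τγ)
    (hout : ∀ᵐ t ∂μ.prod (ν.prod ρ), A t.2 = tokOutF (τβ t.2.1) (τγ t.2.2) ∧
      B (t.1, t.2.2) = tokOutF (τγ t.2.2) (τα t.1) ∧ C (t.1, t.2.1) = tokOutF (τα t.1) (τβ t.2.1))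
    {pα pβ pγ : ℝ} (hpα : 0 < pα) (hpβ : pβ ∈ Set.Ioo (0 : ℝ) 1) (hpγ : pγ < 1)
    (hlaw : ∀ a b c : Fin 3, (μ.prod (ν.prod ρ)).real
      {t | A t.2 = a ∧ B (t.1, t.2.2) = b ∧ C (t.1, t.2.1) = c} = tcP pα pβ pγ a b c) :
    μ.real {x | τα x = true} = pα ∧ ν.real {y | τβ y = true} = pβ ∧
      ρ.real {z | τγ z = true} = pγ := by
  refine eq_of_bern_mul_bern_mul_bern_eq hpα hpβ hpγ fun x y z h => ?_
  have hevent : {t : X × Y × Z | A t.2 = tokOutF y z ∧ B (t.1, t.2.2) = tokOutF z x ∧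
      C (t.1, t.2.1) = tokOutF x y} =ᵐ[μ.prod (ν.prod ρ)]
      {x' | τα x' = x} ×ˢ {y' | τβ y' = y} ×ˢ {z' | τγ z' = z} := by
    filter_upwards [hout] with t ⟨ha, hb, hc⟩
    refine propext ?_
    change (A t.2 = _ ∧ B _ = _ ∧ C _ = _) ↔ τα t.1 = x ∧ τβ t.2.1 = y ∧ τγ t.2.2 = z
    rw [ha, hb, hc, tokOutF_eq_iff h]
  rw [bern_measureReal μ hτα, bern_measureReal ν hτβ, bern_measureReal ρ hτγ, mul_assoc,
    ← measureReal_prod_prod, ← measureReal_prod_prod, ← measureReal_congr hevent, hlaw]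
  exact tcP_tokOutF pα pβ pγ h

theorem exists_ae_eq_tokOutF_of_law {A : Y × Z → Fin 3} {B : X × Z → Fin 3} {C : X × Y → Fin 3}
    (hB : Measurable B) (hC : Measurable C) {pα pβ pγ : ℝ} (hpα : pα ∈ Set.Ioo (0 : ℝ) 1)
    (hpβ : pβ ∈ Set.Ioo (0 : ℝ) 1) (hpγ : pγ ∈ Set.Ioo (0 : ℝ) 1)
    (hlaw : ∀ a b c : Fin 3, (μ.prod (ν.prod ρ)).real
      {t | A t.2 = a ∧ B (t.1, t.2.2) = b ∧ C (t.1, t.2.1) = c} = tcP pα pβ pγ a b c) :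
    ∃ (τα : X → Bool) (τβ : Y → Bool) (τγ : Z → Bool),
      Measurable τα ∧ Measurable τβ ∧ Measurable τγ ∧
      (μ.real {x | τα x = true} = pα ∧ ν.real {y | τβ y = true} = pβ ∧
        ρ.real {z | τγ z = true} = pγ) ∧
      ∀ᵐ t ∂μ.prod (ν.prod ρ), A t.2 = tokOutF (τβ t.2.1) (τγ t.2.2) ∧
        B (t.1, t.2.2) = tokOutF (τγ t.2.2) (τα t.1) ∧
        C (t.1, t.2.1) = tokOutF (τα t.1) (τβ t.2.1) := by
  have hforbidden : ∀ᵐ t ∂μ.prod (ν.prod ρ), ∀ a b c : Fin 3, (a : ℕ) + b + c ≠ 3 →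
      ¬ (A t.2 = a ∧ B (t.1, t.2.2) = b ∧ C (t.1, t.2.1) = c) := by
    simp only [ae_all_iff]
    exact fun a b c habc => measure_eq_zero_iff_ae_notMem.1 <|
      (measureReal_eq_zero_iff).1 ((hlaw a b c).trans (tcP_eq_zero pα pβ pγ habc))
  have hsum : ∀ᵐ t ∂μ.prod (ν.prod ρ),
      (A t.2 : ℕ) + (B (t.1, t.2.2) : ℕ) + (C (t.1, t.2.1) : ℕ) = 3 :=
    hforbidden.mono fun t ht => by_contra fun hne => ht _ _ _ hne ⟨rfl, rfl, rfl⟩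
  have hattained : ∀ x y z : Bool, ¬ (x = y ∧ y = z) → ∃ᵐ t ∂μ.prod (ν.prod ρ),
      A t.2 = tokOutF y z ∧ B (t.1, t.2.2) = tokOutF z x ∧ C (t.1, t.2.1) = tokOutF x y := by
    refine fun x y z h => frequently_ae_iff.2 fun hzero => ?_
    have hpos := mul_pos (mul_pos (bern_pos hpα x) (bern_pos hpβ y)) (bern_pos hpγ z)
    rw [← tcP_tokOutF pα pβ pγ h] at hpos
    exact hpos.ne' ((hlaw _ _ _).symm.trans ((measureReal_eq_zero_iff).2 hzero))
  obtain ⟨τα, τβ, τγ, hτα, hτβ, hτγ, hout⟩ := exists_ae_eq_tokOutF hB hC hsum hattained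
  exact ⟨τα, τβ, τγ, hτα, hτβ, hτγ,
    measureReal_eq_of_ae_eq_tokOutF hτα hτβ hτγ hout hpα.1 hpβ hpγ.2 hlaw, hout⟩

end TokenCounting

/-- token-counting rigidity on the triangle.  Any local model whose
distribution (with outputs in `{0,1,2}`, encoded by `Fin 3`) is the single-token TC
distribution with parameters `(pα,pβ,pγ) ∈ (0,1)³` arises from token variables
`τα, τβ, τγ` at the sources: `Pr(τ_ξ = 1) = p_ξ` and almost surely each response
kernel deterministically outputs the corresponding token count. -/
theorem stmt_5 {Λα Λβ Λγ : Type}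
    [MeasurableSpace Λα] [MeasurableSpace Λβ] [MeasurableSpace Λγ]
    (μα : Measure Λα) (μβ : Measure Λβ) (μγ : Measure Λγ)
    [IsProbabilityMeasure μα] [IsProbabilityMeasure μβ] [IsProbabilityMeasure μγ]
    (pA : Fin 3 → Λβ → Λγ → ℝ) (pB : Fin 3 → Λα → Λγ → ℝ) (pC : Fin 3 → Λα → Λβ → ℝ)
    (hmA : ∀ a, Measurable fun q : Λβ × Λγ => pA a q.1 q.2)
    (hmB : ∀ b, Measurable fun q : Λα × Λγ => pB b q.1 q.2)
    (hmC : ∀ c, Measurable fun q : Λα × Λβ => pC c q.1 q.2)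
    (hA : ∀ x y, (∀ a, 0 ≤ pA a x y) ∧ ∑ a, pA a x y = 1)
    (hB : ∀ x y, (∀ b, 0 ≤ pB b x y) ∧ ∑ b, pB b x y = 1)
    (hC : ∀ x y, (∀ c, 0 ≤ pC c x y) ∧ ∑ c, pC c x y = 1)
    (pα pβ pγ : ℝ)
    (hpα : pα ∈ Set.Ioo (0:ℝ) 1) (hpβ : pβ ∈ Set.Ioo (0:ℝ) 1) (hpγ : pγ ∈ Set.Ioo (0:ℝ) 1)
    (hTC : ∀ a b c : Fin 3,
      (∫ xα, ∫ xβ, ∫ xγ, pA a xβ xγ * pB b xα xγ * pC c xα xβ ∂μγ ∂μβ ∂μα)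
        = tcP pα pβ pγ (a : ℕ) (b : ℕ) (c : ℕ)) :
    ∃ (τα : Λα → Bool) (τβ : Λβ → Bool) (τγ : Λγ → Bool),
      Measurable τα ∧ Measurable τβ ∧ Measurable τγ ∧
      μα {x | τα x = true} = ENNReal.ofReal pα ∧
      μβ {x | τβ x = true} = ENNReal.ofReal pβ ∧
      μγ {x | τγ x = true} = ENNReal.ofReal pγ ∧
      (∀ᵐ q ∂(μβ.prod μγ), pA (tokOutF (τβ q.1) (τγ q.2)) q.1 q.2 = 1) ∧
      (∀ᵐ q ∂(μα.prod μγ), pB (tokOutF (τγ q.2) (τα q.1)) q.1 q.2 = 1) ∧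
      (∀ᵐ q ∂(μα.prod μβ), pC (tokOutF (τα q.1) (τβ q.2)) q.1 q.2 = 1) := by
  have hA' : IsResponse fun a (q : Λβ × Λγ) => pA a q.1 q.2 := ⟨hmA, fun q => hA q.1 q.2⟩
  have hB' : IsResponse fun b (q : Λα × Λγ) => pB b q.1 q.2 := ⟨hmB, fun q => hB q.1 q.2⟩
  have hC' : IsResponse fun c (q : Λα × Λβ) => pC c q.1 q.2 := ⟨hmC, fun q => hC q.1 q.2⟩
  have hlaw (a b c : Fin 3) : ∫ t : Λα × Λβ × Λγ, pA a t.2.1 t.2.2 * pB b t.1 t.2.2 *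
      pC c t.1 t.2.1 ∂μα.prod (μβ.prod μγ) = tcP pα pβ pγ a b c :=
    (integral_integral_integral <| (hA'.comp measurable_snd).integrable_mul_mul
      (hB'.comp (f := fun t => (t.1, t.2.2)) (by fun_prop))
      (hC'.comp (f := fun t => (t.1, t.2.1)) (by fun_prop)) a b c).symm.trans (hTC a b c)
  obtain ⟨A, B, C, -, hBm, hCm, hdet, hABC⟩ := exists_measurable_ae_apply_eq_one hA' hB' hC'
    (R := fun a b c => (a : ℕ) + b + c = 3) (by lia) (by lia) (by lia)
    fun a b c h => (hlaw a b c).trans (tcP_eq_zero pα pβ pγ h)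
  obtain ⟨τα, τβ, τγ, hτα, hτβ, hτγ, ⟨rfl, rfl, rfl⟩, hout⟩ := exists_ae_eq_tokOutF_of_law hBm hCm
    hpα hpβ hpγ fun a b c => (hABC a b c).trans (hlaw a b c)
  have htokens : ∀ᵐ t ∂μα.prod (μβ.prod μγ), pA (tokOutF (τβ t.2.1) (τγ t.2.2)) t.2.1 t.2.2 = 1 ∧
      pB (tokOutF (τγ t.2.2) (τα t.1)) t.1 t.2.2 = 1 ∧
      pC (tokOutF (τα t.1) (τβ t.2.1)) t.1 t.2.1 = 1 := by
    filter_upwards [hdet, hout] with t hdet_t ⟨ha, hb, hc⟩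
    rwa [ha, hb, hc] at hdet_t
  refine ⟨τα, τβ, τγ, hτα, hτβ, hτγ, (ofReal_measureReal).symm, (ofReal_measureReal).symm,
    (ofReal_measureReal).symm, ?_, ?_, ?_⟩
  · exact (Measure.ae_ae_of_ae_prod htokens).exists.elim fun _ h => h.mono fun _ h => h.1
  · exact (ae_snd_fst_ae_of_ae_prod htokens).exists.elim fun _ h => h.mono fun _ h => h.2.1
  · exact (ae_snd_snd_ae_of_ae_prod htokens).exists.elim fun _ h => h.mono fun _ h => h.2.2
end

section
/- The function g : [0, 1/2] → ℝ defined by g(x) = h((1 − √(1 − 4x²))/2) is convex on [0, 1/2] and monotone nondecreasing on [0, 1/2]. -/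
/-- Binary entropy (natural logarithm; the claim is base-independent). -/
noncomputable def binEnt (x : ℝ) : ℝ := -(x * Real.log x) - (1 - x) * Real.log (1 - x)

/-- The function `g(x) = h((1 − √(1 − 4x²))/2)`. -/
noncomputable def gfun (x : ℝ) : ℝ := binEnt ((1 - Real.sqrt (1 - 4 * x ^ 2)) / 2)

/-!
Put `s = √(1 - 4x²)` and `u = artanh s`. Since `d/ds h((1 - s)/2) = -artanh s` and
`sinh (artanh s) = s / (2x)`, the chain rule gives `g'(x) = 4x · artanh s / s = 2u / sinh u`.
This is positive, and it increases with `x`: `u` decreases in `x`, and `u / sinh u` decreases in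
`u > 0` because `sinh` is convex on `[0, ∞)` and vanishes at `0`.
-/

open Real Set

lemma strictConvexOn_sinh : StrictConvexOn ℝ (Ici 0) sinh := by
  refine StrictMonoOn.strictConvexOn_of_deriv (convex_Ici 0) continuous_sinh.continuousOn ?_
  rw [Real.deriv_sinh]
  exact cosh_strictMonoOn.mono interior_subset

lemma strictAntiOn_div_sinh : StrictAntiOn (fun u : ℝ => u / sinh u) (Ioi 0) := by
  intro u (hu : 0 < u) v (hv : 0 < v) huv
  have hsecant : sinh u / u < sinh v / v := by
    simpa using strictConvexOn_sinh.secant_strict_mono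
      self_mem_Ici hu.le hv.le hu.ne' hv.ne' huv
  simpa only [inv_div] using inv_strictAnti₀ (div_pos (sinh_pos_iff.2 hu) hu) hsecant

lemma hasDerivAt_binEntropy_one_sub_div_two {s : ℝ} (hs : s ∈ Ioo (-1) 1) :
    HasDerivAt (fun t => binEntropy ((1 - t) / 2)) (-artanh s) s := by
  obtain ⟨hs₁, hs₂⟩ := hs
  have hentropy := hasDerivAt_binEntropy (p := (1 - s) / 2) (by linarith) (by linarith)
  refine (hentropy.comp s (((hasDerivAt_id s).const_sub 1).div_const 2)).congr_deriv ?_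
  rw [artanh_eq_half_log ⟨hs₁.le, hs₂.le⟩, ← log_div (by linarith) (by linarith),
    show (1 - (1 - s) / 2) / ((1 - s) / 2) = (1 + s) / (1 - s) by field_simp; ring]
  ring

lemma sqrt_one_sub_four_mul_sq_mem_Ioo {x : ℝ} (hx : x ∈ Ioo (0 : ℝ) (1 / 2)) :
    √(1 - 4 * x ^ 2) ∈ Ioo (0 : ℝ) 1 := by
  obtain ⟨hx₀, hx₁⟩ := hx
  refine ⟨sqrt_pos.2 (by nlinarith), ?_⟩
  rw [sqrt_lt' one_pos]
  nlinarith

lemma strictAntiOn_sqrt_one_sub_four_mul_sq :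
    StrictAntiOn (fun x : ℝ => √(1 - 4 * x ^ 2)) (Icc 0 (1 / 2)) := by
  intro x ⟨hx, _⟩ y ⟨_, hy⟩ hxy
  exact sqrt_lt_sqrt (by nlinarith) (by gcongr)

lemma hasDerivAt_sqrt_one_sub_four_mul_sq {x : ℝ} (hx : 1 - 4 * x ^ 2 ≠ 0) :
    HasDerivAt (fun y : ℝ => √(1 - 4 * y ^ 2)) (-(4 * x) / √(1 - 4 * x ^ 2)) x := by
  refine ((((hasDerivAt_pow 2 x).const_mul 4).const_sub 1).sqrt hx).congr_deriv ?_
  ring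

lemma sinh_artanh_sqrt_one_sub_four_mul_sq {x : ℝ} (hx : x ∈ Ioo (0 : ℝ) (1 / 2)) :
    sinh (artanh √(1 - 4 * x ^ 2)) = √(1 - 4 * x ^ 2) / (2 * x) := by
  obtain ⟨hs₀, hs₁⟩ := sqrt_one_sub_four_mul_sq_mem_Ioo hx
  rw [sinh_artanh ⟨by linarith, hs₁⟩, sq_sqrt (sqrt_pos.1 hs₀).le,
    show 1 - (1 - 4 * x ^ 2) = (2 * x) ^ 2 by ring, sqrt_sq (by linarith [hx.1])]

lemma gfun_eq_binEntropy (x : ℝ) : gfun x = binEntropy ((1 - √(1 - 4 * x ^ 2)) / 2) := by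
  simp only [gfun, binEnt, binEntropy, log_inv]
  ring

lemma continuous_gfun : Continuous gfun := by
  simp only [funext gfun_eq_binEntropy]
  fun_prop

lemma deriv_gfun {x : ℝ} (hx : x ∈ Ioo (0 : ℝ) (1 / 2)) :
    deriv gfun x =
      2 * (artanh √(1 - 4 * x ^ 2) / sinh (artanh √(1 - 4 * x ^ 2))) := by
  obtain ⟨hs₀, hs₁⟩ := sqrt_one_sub_four_mul_sq_mem_Ioo hx
  have hchain := (hasDerivAt_binEntropy_one_sub_div_two ⟨by linarith, hs₁⟩).comp x
    (hasDerivAt_sqrt_one_sub_four_mul_sq (sqrt_pos.1 hs₀).ne')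
  rw [funext gfun_eq_binEntropy, sinh_artanh_sqrt_one_sub_four_mul_sq hx]
  refine hchain.deriv.trans ?_
  field_simp
  ring

lemma strictMonoOn_deriv_gfun : StrictMonoOn (deriv gfun) (Ioo 0 (1 / 2)) := by
  intro x hx y hy hxy
  have hsx := sqrt_one_sub_four_mul_sq_mem_Ioo hx
  have hsy := sqrt_one_sub_four_mul_sq_mem_Ioo hy
  have hsqrt : √(1 - 4 * y ^ 2) < √(1 - 4 * x ^ 2) :=
    strictAntiOn_sqrt_one_sub_four_mul_sq (Ioo_subset_Icc_self hx) (Ioo_subset_Icc_self hy) hxy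
  have hartanh : artanh √(1 - 4 * y ^ 2) < artanh √(1 - 4 * x ^ 2) :=
    artanh_lt_artanh (by linarith [hsy.1]) hsx.2 hsqrt
  rw [deriv_gfun hx, deriv_gfun hy]
  exact mul_lt_mul_of_pos_left
    (strictAntiOn_div_sinh (artanh_pos hsy) (artanh_pos hsx) hartanh) two_pos

lemma deriv_gfun_pos {x : ℝ} (hx : x ∈ Ioo (0 : ℝ) (1 / 2)) : 0 < deriv gfun x := by
  have hartanh := artanh_pos (sqrt_one_sub_four_mul_sq_mem_Ioo hx)
  rw [deriv_gfun hx]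
  exact mul_pos two_pos (div_pos hartanh (sinh_pos_iff.2 hartanh))

lemma strictConvexOn_gfun : StrictConvexOn ℝ (Icc 0 (1 / 2)) gfun :=
  StrictMonoOn.strictConvexOn_of_deriv (convex_Icc _ _) continuous_gfun.continuousOn <| by
    simpa only [interior_Icc] using strictMonoOn_deriv_gfun

lemma strictMonoOn_gfun : StrictMonoOn gfun (Icc 0 (1 / 2)) :=
  strictMonoOn_of_deriv_pos (convex_Icc _ _) continuous_gfun.continuousOn fun x hx =>
    deriv_gfun_pos (by rwa [interior_Icc] at hx)

/-- `g` is convex and monotone nondecreasing on `[0, 1/2]`. -/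
theorem stmt_10 :
    ConvexOn ℝ (Set.Icc (0:ℝ) (1/2)) gfun ∧ MonotoneOn gfun (Set.Icc (0:ℝ) (1/2)) :=
  ⟨strictConvexOn_gfun.convexOn, strictMonoOn_gfun.monotoneOn⟩
end
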